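/- For all real numbers A > 0 and B > 0, the supremum over pairs (w, l) ∈ (0, ∞) × (0, ∞) of the quantity log₂(w²) + log₂ l − (l/ln 2)·((√A − w)² + B) equals log₂(1 + A/B) − 1/ln 2. -/

import Mathlib

/-!
For fixed `w`, maximizing over `l` replaces `log l - l * e` by `-log e - 1`, where
`e = (√A - w) ^ 2 + B`; this is the tangent-line bound for `log` at `1` applied to `l * e`, with
equality at `l = 1 / e`. What is left is to maximize the ratio `w ^ 2 / e`. Writing
`w = √A - (√A - w)`, the Cauchy–Schwarz inequality bounds it by `1 + A / B`, with equality at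
`w = (A + B) / √A`.
-/

open Real Set

theorem isGreatest_range_logb_sub_div_log_mul {b e : ℝ} (hb : 1 < b) (he : 0 < e) :
    IsGreatest (range fun l : Ioi (0 : ℝ) => logb b l - l / log b * e)
      (-logb b e - 1 / log b) := by
  have hlog : 0 < log b := log_pos hb
  constructor
  · refine ⟨⟨e⁻¹, inv_pos.2 he⟩, ?_⟩
    simp only [logb_inv, div_mul_eq_mul_div, inv_mul_cancel₀ he.ne']
  · rintro _ ⟨⟨l, hl : 0 < l⟩, rfl⟩
    have tangent : log l + log e ≤ l * e - 1 := by
      rw [← log_mul hl.ne' he.ne']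
      exact log_le_sub_one_of_pos (mul_pos hl he)
    calc logb b l - l / log b * e = (log l - l * e) / log b := by rw [logb]; ring
      _ ≤ (-log e - 1) / log b := div_le_div_of_nonneg_right (by linarith) hlog.le
      _ = -logb b e - 1 / log b := by rw [logb]; ring

theorem isGreatest_range_logb_add_logb_sub_div_log_mul {ι : Type*} {b M : ℝ} {v e : ι → ℝ}
    (hb : 1 < b) (hv : ∀ i, 0 < v i) (he : ∀ i, 0 < e i)
    (hM : IsGreatest (range fun i => v i / e i) M) :
    IsGreatest (range fun p : ι × Ioi (0 : ℝ) =>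
        logb b (v p.1) + logb b p.2 - p.2 / log b * e p.1)
      (logb b M - 1 / log b) := by
  have logb_ratio (i : ι) : logb b (v i / e i) = logb b (v i) - logb b (e i) :=
    logb_div (hv i).ne' (he i).ne'
  obtain ⟨⟨i₀, rfl⟩, ratio_le⟩ := hM
  constructor
  · obtain ⟨l₀, hl₀⟩ := (isGreatest_range_logb_sub_div_log_mul hb (he i₀)).1
    exact ⟨(i₀, l₀), by linear_combination hl₀ - logb_ratio i₀⟩
  · rintro _ ⟨⟨i, l⟩, rfl⟩
    have inner_le := (isGreatest_range_logb_sub_div_log_mul hb (he i)).2 (mem_range_self l)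
    have logb_ratio_le : logb b (v i / e i) ≤ logb b (v i₀ / e i₀) :=
      logb_le_logb_of_le hb (div_pos (hv i) (he i)) (ratio_le (mem_range_self i))
    linarith [logb_ratio i]

theorem sq_div_sub_sq_add_le {B : ℝ} (hB : 0 < B) (s w : ℝ) :
    w ^ 2 / ((s - w) ^ 2 + B) ≤ 1 + s ^ 2 / B := by
  have cauchy_schwarz_defect :
      (1 + s ^ 2 / B) * ((s - w) ^ 2 + B) - w ^ 2 = (s * (s - w) + B) ^ 2 / B := by
    field_simp
    ring
  rw [div_le_iff₀ (by positivity), ← sub_nonneg, cauchy_schwarz_defect]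
  positivity

theorem isGreatest_range_sq_div_sub_sq_add {s B : ℝ} (hs : 0 < s) (hB : 0 < B) :
    IsGreatest (range fun w : Ioi (0 : ℝ) => (w : ℝ) ^ 2 / ((s - w) ^ 2 + B))
      (1 + s ^ 2 / B) := by
  constructor
  · refine ⟨⟨(s ^ 2 + B) / s, mem_Ioi.2 (by positivity)⟩, ?_⟩
    have error_eq : (s - (s ^ 2 + B) / s) ^ 2 + B = B * (s ^ 2 + B) / s ^ 2 := by
      field_simp
      ring
    simp only [error_eq]
    field_simp
    ring
  · rintro _ ⟨w, rfl⟩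
    exact sq_div_sub_sq_add_le hB s w

/-- For `A, B > 0`, the supremum over pairs `(w, l) ∈ (0,∞) × (0,∞)` of
`log₂(w²) + log₂ l − (l/ln 2)·((√A − w)² + B)` equals `log₂(1 + A/B) − 1/ln 2`. -/
theorem stmt_10 (A B : ℝ) (hA : 0 < A) (hB : 0 < B) :
    (⨆ p : Set.Ioi (0 : ℝ) × Set.Ioi (0 : ℝ),
        (Real.logb 2 ((p.1 : ℝ) ^ 2) + Real.logb 2 (p.2 : ℝ)
          - ((p.2 : ℝ) / Real.log 2) * ((Real.sqrt A - (p.1 : ℝ)) ^ 2 + B)))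
      = Real.logb 2 (1 + A / B) - 1 / Real.log 2 := by
  have ratio_max := isGreatest_range_sq_div_sub_sq_add (Real.sqrt_pos.2 hA) hB
  rw [Real.sq_sqrt hA.le] at ratio_max
  have objective_max := isGreatest_range_logb_add_logb_sub_div_log_mul one_lt_two
    (fun w => pow_pos w.2 2) (fun w => by positivity) ratio_max
  exact objective_max.csSup_eq
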